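/- arXiv:1912.02266 — 2 statements merged into one kernel-verified Lean document; each statement's English description precedes it below -/
import Mathlib

section
/- Let r ≥ 5, let ℓ ≥ 0, and let I = {i_1 < i_2 < ⋯ < i_ℓ} be a set of nonconsecutive integers with 1 < i_1 and i_ℓ < r−2 (so i_{j+1} ≥ i_j + 2 for all j), and let c_{i_1},…,c_{i_ℓ} be positive integers. Let λ ∈ ℕ^r have i_j-th coordinate 1 + c_{i_j} for each j and all other coordinates 1, and set m = Σ_{j=1}^ℓ c_{i_j}. Then, as polynomials in ℤ[q], Σ_{k≥0} N^B_k(λ)·q^k = q^{m+1}·(1+q)^{r−1−2ℓ}·(2+2q+q²)^ℓ. -/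
open Polynomial

/-- The positive roots of the Lie algebra of type `B_r` in simple-root coordinates
(`1`-based positions): the interval vectors `α[i,j]` for `1 ≤ i ≤ j ≤ r`, together with
the vectors `β[i,j]` (value `1` at positions `i..j−1`, value `2` at positions `j..r`)
for `1 ≤ i < j ≤ r`. -/
def isPosRootB (r : ℕ) (v : Fin r → ℕ) : Prop :=
  (∃ i j : ℕ, 1 ≤ i ∧ i ≤ j ∧ j ≤ r ∧
    v = fun t => if i ≤ t.val + 1 ∧ t.val + 1 ≤ j then 1 else 0) ∨
  (∃ i j : ℕ, 1 ≤ i ∧ i < j ∧ j ≤ r ∧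
    v = fun t => if i ≤ t.val + 1 ∧ t.val + 1 ≤ j - 1 then 1
      else if j ≤ t.val + 1 then 2 else 0)

/-- `NB r k λ` is the number of decompositions of the weight `λ` as a sum of exactly `k`
positive roots of `B_r`. -/
noncomputable def NB (r k : ℕ) (lam : Fin r → ℕ) : ℕ :=
  Set.ncard {m : (Fin r → ℕ) →₀ ℕ |
    (∀ v ∈ m.support, isPosRootB r v) ∧
    (m.sum fun _ n => n) = k ∧
    (m.sum fun v n => n • v) = lam}

/-!
Since the last coordinate of `λ` is `1`, no root `β[i,j]` can occur, so a decomposition of `λ`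
is a multiset of intervals covering position `t` exactly `λ t` times. Sweep through the
positions from left to right: a decomposition of `λ` on `[1, n + 1]` arises from one on `[1, n]`
by lengthening some of the intervals ending at `n` to end at `n + 1` and adding copies of
`[n + 1, n + 1]`. Exactly one interval covers a position of height `1`. Passing from there to a
next position of height `1` either lengthens this interval or adds a new one, which gives the
factor `1 + q`. Passing a peak of height `1 + c` in between gives `q ^ (1 + c) * (q + 1)` or
`q ^ c * (q + 2)`, according to whether the interval ends before the peak or not: in the first
case the intervals ending at the peak are all equal, in the second there are two different ones
to choose from when stepping down. The sum is `q ^ c * (2 + 2 * q + q ^ 2)`.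
-/

section MultisetMap

variable {α β : Type*} {f : α → β} {s : Set α} {t : Set β}

theorem multiset_map_eq_self {g : α → α} {P : Multiset α} (h : ∀ x ∈ P, g x = x) :
    P.map g = P := by
  rw [Multiset.map_congr rfl h, Multiset.map_id']

theorem injOn_multiset_map (hf : Set.InjOn f s) :
    Set.InjOn (Multiset.map f) {P | ∀ x ∈ P, x ∈ s} := by
  intro P hP Q hQ h
  lift P to Multiset s using hP
  lift Q to Multiset s using hQ
  rw [Multiset.map_map, Multiset.map_map] at h
  rw [Multiset.map_injective hf.injective h]

theorem surjOn_multiset_map (hf : Set.SurjOn f s t) :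
    Set.SurjOn (Multiset.map f) {P | ∀ x ∈ P, x ∈ s} {Q | ∀ y ∈ Q, y ∈ t} := by
  intro Q hQ
  choose g hg hfg using fun y : t => hf y.2
  lift Q to Multiset t using hQ
  refine ⟨Q.map g, fun x hx => ?_, ?_⟩
  · obtain ⟨y, -, rfl⟩ := Multiset.mem_map.1 hx
    exact hg y
  · rw [Multiset.map_map]
    exact Multiset.map_congr rfl fun y _ => hfg y

theorem bijOn_multiset_map (hf : Set.BijOn f s t) :
    Set.BijOn (Multiset.map f) {P | ∀ x ∈ P, x ∈ s} {Q | ∀ y ∈ Q, y ∈ t} :=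
  ⟨fun P hP => by simpa using fun x hx => hf.mapsTo (hP x hx),
    injOn_multiset_map hf.injOn, surjOn_multiset_map hf.surjOn⟩

end MultisetMap

/-- The pair `x` encodes a nonempty interval `[x.1, x.2]` of positions among `1, …, n`. -/
def IsInterval (n : ℕ) (x : ℕ × ℕ) : Prop := 1 ≤ x.1 ∧ x.1 ≤ x.2 ∧ x.2 ≤ n

/-- The number of intervals in `P`, with multiplicity, that contain the position `t`. -/
def coverage (P : Multiset (ℕ × ℕ)) (t : ℕ) : ℕ := P.countP fun x => x.1 ≤ t ∧ t ≤ x.2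

/-- `P` decomposes the restriction of the height function `L` to the positions `1, …, n` into
intervals. -/
structure IsIntervalDecomposition (L : ℕ → ℕ) (n : ℕ) (P : Multiset (ℕ × ℕ)) : Prop where
  isInterval : ∀ x ∈ P, IsInterval n x
  coverage_eq : ∀ t, 1 ≤ t → t ≤ n → coverage P t = L t

/-- The intervals in `P` that end at the position `n`. -/
def endingAt (n : ℕ) (P : Multiset (ℕ × ℕ)) : Multiset (ℕ × ℕ) := P.filter (·.2 = n)

/-- One step of the sweep: the intervals in `A ≤ endingAt n P` are lengthened to end at `n + 1`, and
`k` copies of `[n + 1, n + 1]` are added. -/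
def extend (n k : ℕ) (P A : Multiset (ℕ × ℕ)) : Multiset (ℕ × ℕ) :=
  P - A + A.map (fun x => (x.1, n + 1)) + Multiset.replicate k (n + 1, n + 1)

/-- The restrictions of the intervals in `Q` to the positions up to `n`; it recovers `P` from
`extend n k P A`. -/
def truncate (n : ℕ) (Q : Multiset (ℕ × ℕ)) : Multiset (ℕ × ℕ) :=
  (Q.filter (·.1 ≤ n)).map fun x => (x.1, min x.2 n)

/-- The restrictions to the positions up to `n` of the intervals in `Q` that contain both `n` and
`n + 1`; it recovers `A` from `extend n k P A`. -/
def carried (n : ℕ) (Q : Multiset (ℕ × ℕ)) : Multiset (ℕ × ℕ) :=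
  (Q.filter fun x => x.1 ≤ n ∧ n < x.2).map fun x => (x.1, n)

section Extend

variable {L : ℕ → ℕ} {n k : ℕ} {P A Q : Multiset (ℕ × ℕ)}

theorem coverage_add (P Q : Multiset (ℕ × ℕ)) (t : ℕ) :
    coverage (P + Q) t = coverage P t + coverage Q t :=
  Multiset.countP_add _ _ _

theorem truncate_add (n : ℕ) (P Q : Multiset (ℕ × ℕ)) :
    truncate n (P + Q) = truncate n P + truncate n Q := by
  simp only [truncate, Multiset.filter_add, Multiset.map_add]

theorem le_of_le_endingAt (hA : A ≤ endingAt n P) : A ≤ P :=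
  hA.trans (Multiset.filter_le _ _)

theorem snd_eq_of_le_endingAt (hA : A ≤ endingAt n P) : ∀ x ∈ A, x.2 = n :=
  fun _ hx => (Multiset.mem_filter.1 (Multiset.mem_of_le hA hx)).2

theorem isInterval_of_mem_sub (hP : ∀ x ∈ P, IsInterval n x) : ∀ x ∈ P - A, IsInterval n x :=
  fun x hx => hP x (Multiset.mem_of_le tsub_le_self hx)

theorem card_extend (hA : A ≤ P) : (extend n k P A).card = P.card + k := by
  rw [extend, Multiset.card_add, Multiset.card_add, Multiset.card_map, Multiset.card_replicate,
    ← Multiset.card_add, tsub_add_cancel_of_le hA]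

theorem isInterval_of_mem_extend (hP : ∀ x ∈ P, IsInterval n x) (hA : A ≤ P) :
    ∀ x ∈ extend n k P A, IsInterval (n + 1) x := by
  intro x hx
  simp only [extend, Multiset.mem_add, Multiset.mem_map] at hx
  rcases hx with (hx | ⟨y, hy, rfl⟩) | hx
  · grind [IsInterval, isInterval_of_mem_sub hP x hx]
  · grind [IsInterval, hP y (Multiset.mem_of_le hA hy)]
  · rw [Multiset.eq_of_mem_replicate hx]
    grind [IsInterval]

theorem coverage_extend_of_le (hA : A ≤ endingAt n P) {t : ℕ} (ht : t ≤ n) :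
    coverage (extend n k P A) t = coverage P t := by
  have hlong : coverage (A.map fun x => (x.1, n + 1)) t = coverage A t := by
    rw [coverage, coverage, Multiset.countP_map, ← Multiset.countP_eq_card_filter]
    exact Multiset.countP_congr rfl fun x hx => by grind [snd_eq_of_le_endingAt hA x hx]
  have hnew : coverage (Multiset.replicate k (n + 1, n + 1)) t = 0 :=
    Multiset.countP_eq_zero.2 fun x hx => by grind [Multiset.eq_of_mem_replicate hx]
  rw [extend, coverage_add, coverage_add, hlong, hnew, add_zero, ← coverage_add,
    tsub_add_cancel_of_le (le_of_le_endingAt hA)]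

theorem card_endingAt (hP : ∀ x ∈ P, IsInterval n x) : (endingAt n P).card = coverage P n := by
  rw [endingAt, coverage, ← Multiset.countP_eq_card_filter]
  exact Multiset.countP_congr rfl fun x hx => by grind [IsInterval]

theorem endingAt_extend (hP : ∀ x ∈ P, IsInterval n x) :
    endingAt (n + 1) (extend n k P A) =
      A.map (fun x => (x.1, n + 1)) + Multiset.replicate k (n + 1, n + 1) := by
  have hold : endingAt (n + 1) (P - A) = 0 :=
    Multiset.filter_eq_nil.2 fun x hx => by grind [IsInterval, isInterval_of_mem_sub hP x hx]
  rw [extend, add_assoc, endingAt, Multiset.filter_add, ← endingAt, hold, zero_add,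
    Multiset.filter_eq_self]
  intro x hx
  grind [Multiset.mem_map, Multiset.eq_of_mem_replicate]

theorem coverage_extend_succ (hP : ∀ x ∈ P, IsInterval n x) (hA : A ≤ P) :
    coverage (extend n k P A) (n + 1) = A.card + k := by
  rw [← card_endingAt (isInterval_of_mem_extend hP hA), endingAt_extend hP]
  simp

theorem isIntervalDecomposition_extend_iff (hP : ∀ x ∈ P, IsInterval n x)
    (hA : A ≤ endingAt n P) :
    IsIntervalDecomposition L (n + 1) (extend n k P A) ↔
      IsIntervalDecomposition L n P ∧ A.card + k = L (n + 1) := by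
  have hAP := le_of_le_endingAt hA
  rw [← coverage_extend_succ hP hAP]
  constructor
  · refine fun h => ⟨⟨hP, fun t ht htn => ?_⟩, h.coverage_eq (n + 1) (by omega) le_rfl⟩
    rw [← coverage_extend_of_le hA htn, h.coverage_eq t ht (by omega)]
  · refine fun ⟨h, hlast⟩ => ⟨isInterval_of_mem_extend hP hAP, fun t ht htn => ?_⟩
    rcases Nat.le_succ_iff.1 htn with htn | rfl
    · rw [coverage_extend_of_le hA htn, h.coverage_eq t ht htn]
    · exact hlast

theorem truncate_extend (hP : ∀ x ∈ P, IsInterval n x) (hA : A ≤ endingAt n P) :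
    truncate n (extend n k P A) = P := by
  have hAP := le_of_le_endingAt hA
  have hold : truncate n (P - A) = P - A := by
    have hsub := isInterval_of_mem_sub (A := A) hP
    rw [truncate, Multiset.filter_eq_self.2 fun x hx => by grind [IsInterval]]
    exact multiset_map_eq_self fun x hx => by grind [IsInterval]
  have hlong : truncate n (A.map fun x => (x.1, n + 1)) = A := by
    have hint : ∀ x ∈ A, IsInterval n x := fun x hx => hP x (Multiset.mem_of_le hAP hx)
    rw [truncate, Multiset.filter_map, Multiset.map_map,
      Multiset.filter_eq_self.2 fun x hx => by grind [IsInterval]]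
    exact multiset_map_eq_self fun x hx => by grind [snd_eq_of_le_endingAt hA x hx]
  have hnew : truncate n (Multiset.replicate k (n + 1, n + 1)) = 0 := by
    rw [truncate, Multiset.filter_eq_nil.2 fun x hx => by grind [Multiset.eq_of_mem_replicate],
      Multiset.map_zero]
  rw [extend, truncate_add, truncate_add, hold, hlong, hnew, add_zero, tsub_add_cancel_of_le hAP]

theorem carried_extend (hP : ∀ x ∈ P, IsInterval n x) (hA : A ≤ endingAt n P) :
    carried n (extend n k P A) = A := by
  have hold : (P - A).filter (fun x => x.1 ≤ n ∧ n < x.2) = 0 :=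
    Multiset.filter_eq_nil.2 fun x hx => by grind [IsInterval, isInterval_of_mem_sub hP x hx]
  have hnew : (Multiset.replicate k (n + 1, n + 1)).filter (fun x => x.1 ≤ n ∧ n < x.2) = 0 :=
    Multiset.filter_eq_nil.2 fun x hx => by grind [Multiset.eq_of_mem_replicate]
  rw [carried, extend, Multiset.filter_add, Multiset.filter_add, hold, hnew, zero_add, add_zero,
    Multiset.filter_map, Multiset.map_map, Multiset.filter_eq_self.2 fun x hx => by
      grind [IsInterval, hP x (Multiset.mem_of_le (le_of_le_endingAt hA) hx)]]
  exact multiset_map_eq_self fun x hx => by grind [snd_eq_of_le_endingAt hA x hx]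

theorem exists_eq_extend (hQ : ∀ x ∈ Q, IsInterval (n + 1) x) :
    ∃ k P A, (∀ x ∈ P, IsInterval n x) ∧ A ≤ endingAt n P ∧ extend n k P A = Q := by
  let R := Q.filter (·.2 ≤ n)
  let S := (Q.filter (¬ ·.2 ≤ n)).filter (·.1 ≤ n)
  let T := (Q.filter (¬ ·.2 ≤ n)).filter (¬ ·.1 ≤ n)
  have hRST : R + (S + T) = Q := by simp only [R, S, T, Multiset.filter_add_not]
  have hS : (S.map fun x => (x.1, n)).map (fun x => (x.1, n + 1)) = S := by
    rw [Multiset.map_map]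
    exact multiset_map_eq_self fun x hx => by grind [IsInterval, Multiset.mem_filter]
  have hT : T = Multiset.replicate T.card (n + 1, n + 1) :=
    Multiset.eq_replicate_card.2 fun x hx => by grind [IsInterval, Multiset.mem_filter]
  refine ⟨T.card, R + S.map (fun x => (x.1, n)), S.map fun x => (x.1, n), ?_, ?_, ?_⟩
  · intro x hx
    grind [IsInterval, Multiset.mem_map, Multiset.mem_filter]
  · refine Multiset.le_filter.2 ⟨Multiset.le_add_left _ _, fun x hx => ?_⟩
    obtain ⟨y, -, rfl⟩ := Multiset.mem_map.1 hx
    rfl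
  · rw [extend, add_tsub_cancel_right, hS, ← hT, add_assoc, hRST]

end Extend

/-- The possible multisets of intervals to lengthen when the sweep passes from the decomposition `P`
on `1, …, n` to a position `n + 1` of height `h`. -/
def continuations (h n : ℕ) (P : Multiset (ℕ × ℕ)) : Finset (Multiset (ℕ × ℕ)) :=
  (endingAt n P).powerset.toFinset.filter (·.card ≤ h)

/-- All interval decompositions of `L` on the positions `1, …, n`, built up by the sweep. -/
def decompositions (L : ℕ → ℕ) : ℕ → Finset (Multiset (ℕ × ℕ))
  | 0 => {0}
  | n + 1 => ((decompositions L n).sigma (continuations (L (n + 1)) n)).image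
      fun x => extend n (L (n + 1) - x.2.card) x.1 x.2

section Decompositions

variable {L : ℕ → ℕ} {n h : ℕ} {P A : Multiset (ℕ × ℕ)}

theorem mem_continuations : A ∈ continuations h n P ↔ A ≤ endingAt n P ∧ A.card ≤ h := by
  simp [continuations]

theorem isIntervalDecomposition_zero_iff : IsIntervalDecomposition L 0 P ↔ P = 0 := by
  refine ⟨fun hP => Multiset.eq_zero_of_forall_notMem fun x hx => ?_, ?_⟩
  · grind [IsInterval, hP.isInterval x hx]
  · rintro rfl
    exact ⟨by simp, by omega⟩

theorem mem_decompositions : P ∈ decompositions L n ↔ IsIntervalDecomposition L n P := by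
  induction n generalizing P with
  | zero => rw [decompositions, Finset.mem_singleton, isIntervalDecomposition_zero_iff]
  | succ n ih =>
    simp only [decompositions, Finset.mem_image, Finset.mem_sigma, Sigma.exists, ih,
      mem_continuations]
    constructor
    · rintro ⟨P, A, ⟨hP, hA, hcard⟩, rfl⟩
      exact (isIntervalDecomposition_extend_iff hP.isInterval hA).2 ⟨hP, by omega⟩
    · intro hQ
      obtain ⟨k, P, A, hP, hA, rfl⟩ := exists_eq_extend hQ.isInterval
      obtain ⟨hP, hcard⟩ := (isIntervalDecomposition_extend_iff hP hA).1 hQ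
      exact ⟨P, A, ⟨hP, hA, by omega⟩, by rw [← hcard, Nat.add_sub_cancel_left]⟩

theorem card_endingAt_of_mem_decompositions (hn : 1 ≤ n) (hP : P ∈ decompositions L n) :
    (endingAt n P).card = L n := by
  rw [mem_decompositions] at hP
  rw [card_endingAt hP.isInterval, hP.coverage_eq n hn le_rfl]

theorem sum_decompositions_succ {M : Type*} [AddCommMonoid M] (L : ℕ → ℕ) (n : ℕ)
    (f : Multiset (ℕ × ℕ) → M) :
    ∑ Q ∈ decompositions L (n + 1), f Q =
      ∑ P ∈ decompositions L n, ∑ A ∈ continuations (L (n + 1)) n P,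
        f (extend n (L (n + 1) - A.card) P A) := by
  rw [decompositions, Finset.sum_image, Finset.sum_sigma]
  rintro ⟨P, A⟩ hx ⟨P', A'⟩ hx' heq
  simp only [Finset.coe_sigma, Set.mem_sigma_iff, Finset.mem_coe, mem_decompositions,
    mem_continuations] at hx hx' heq
  obtain rfl : P = P' := by
    rw [← truncate_extend hx.1.isInterval hx.2.1, heq, truncate_extend hx'.1.isInterval hx'.2.1]
  obtain rfl : A = A' := by
    rw [← carried_extend hx.1.isInterval hx.2.1, heq, carried_extend hx'.1.isInterval hx'.2.1]
  rfl

theorem continuations_one (n : ℕ) (P : Multiset (ℕ × ℕ)) :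
    continuations 1 n P = insert 0 ((endingAt n P).toFinset.image fun x => {x}) := by
  ext A
  rw [mem_continuations, Finset.mem_insert, Finset.mem_image, Nat.le_one_iff_eq_zero_or_eq_one,
    Multiset.card_eq_zero, Multiset.card_eq_one]
  constructor
  · rintro ⟨hA, rfl | ⟨x, rfl⟩⟩
    · exact Or.inl rfl
    · exact Or.inr ⟨x, Multiset.mem_toFinset.2 (Multiset.singleton_le.1 hA), rfl⟩
  · rintro (rfl | ⟨x, hx, rfl⟩)
    · exact ⟨Multiset.zero_le _, Or.inl rfl⟩
    · exact ⟨Multiset.singleton_le.2 (Multiset.mem_toFinset.1 hx), Or.inr ⟨x, rfl⟩⟩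

theorem continuations_of_endingAt_eq_singleton {x : ℕ × ℕ} (hh : 1 ≤ h)
    (hx : endingAt n P = {x}) : continuations h n P = {0, {x}} := by
  ext A
  rw [mem_continuations, hx, Multiset.le_singleton, Finset.mem_insert, Finset.mem_singleton,
    and_iff_left_iff_imp]
  rintro (rfl | rfl)
  · exact Nat.zero_le h
  · exact hh

end Decompositions

/-- The generating function, evaluated at `q`, of the interval decompositions of `L` on `1, …, n` by
number of intervals. -/
def decompositionGF {R : Type*} [CommSemiring R] (q : R) (L : ℕ → ℕ) (n : ℕ) : R :=
  ∑ P ∈ decompositions L n, q ^ P.card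

section GeneratingFunction

variable {R : Type*} [CommSemiring R] (q : R) {L : ℕ → ℕ} {n : ℕ}

theorem decompositionGF_succ_of_eq_one (h : L (n + 1) = 1) :
    decompositionGF q L (n + 1) =
      ∑ P ∈ decompositions L n, q ^ P.card * (q + (endingAt n P).toFinset.card) := by
  rw [decompositionGF, sum_decompositions_succ]
  refine Finset.sum_congr rfl fun P _ => ?_
  calc ∑ A ∈ continuations (L (n + 1)) n P, q ^ (extend n (L (n + 1) - A.card) P A).card
      = ∑ A ∈ continuations 1 n P, q ^ P.card * q ^ (1 - A.card) := by
        rw [h]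
        refine Finset.sum_congr rfl fun A hA => ?_
        rw [card_extend (le_of_le_endingAt (mem_continuations.1 hA).1), pow_add]
    _ = q ^ P.card * (q + (endingAt n P).toFinset.card) := by
        rw [← Finset.mul_sum, continuations_one, Finset.sum_insert (by simp),
          Finset.sum_image (by simp)]
        simp

theorem decompositionGF_one (h : L 1 = 1) : decompositionGF q L 1 = q := by
  rw [decompositionGF_succ_of_eq_one q h]
  simp [decompositions, endingAt]

theorem decompositionGF_succ_of_flat (hn : 1 ≤ n) (h₀ : L n = 1) (h₁ : L (n + 1) = 1) :
    decompositionGF q L (n + 1) = decompositionGF q L n * (1 + q) := by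
  rw [decompositionGF_succ_of_eq_one q h₁, decompositionGF, Finset.sum_mul]
  refine Finset.sum_congr rfl fun P hP => ?_
  obtain ⟨x, hx⟩ := Multiset.card_eq_one.1 ((card_endingAt_of_mem_decompositions hn hP).trans h₀)
  rw [hx]
  simp [add_comm]

theorem decompositionGF_add_two_of_peak {c : ℕ} (hn : 1 ≤ n) (hc : 1 ≤ c) (h₀ : L n = 1)
    (h₁ : L (n + 1) = 1 + c) (h₂ : L (n + 2) = 1) :
    decompositionGF q L (n + 2) =
      decompositionGF q L n * (q ^ c * (2 + 2 * q + q ^ 2)) := by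
  rw [decompositionGF_succ_of_eq_one q h₂, sum_decompositions_succ, h₁, decompositionGF,
    Finset.sum_mul]
  refine Finset.sum_congr rfl fun P hP => ?_
  obtain ⟨x, hx⟩ := Multiset.card_eq_one.1 ((card_endingAt_of_mem_decompositions hn hP).trans h₀)
  have hint := (mem_decompositions.1 hP).isInterval
  have hle : {x} ≤ P := le_of_le_endingAt hx.ge
  have hxn : x.1 ≤ n := by grind [IsInterval, hint x (Multiset.singleton_le.1 hle)]
  have hended : (endingAt (n + 1) (extend n (1 + c) P 0)).toFinset.card = 1 := by
    rw [endingAt_extend hint]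
    simp [Multiset.toFinset_replicate]
  have hlengthen : (endingAt (n + 1) (extend n c P {x})).toFinset.card = 2 := by
    rw [endingAt_extend hint, Multiset.toFinset_add, Multiset.toFinset_replicate,
      if_neg (by omega)]
    exact Finset.card_pair (by grind)
  rw [continuations_of_endingAt_eq_singleton (by omega) hx,
    Finset.sum_pair (Multiset.singleton_ne_zero x).symm, Multiset.card_zero,
    Multiset.card_singleton, Nat.sub_zero, Nat.add_sub_cancel_left, hended, hlengthen,
    card_extend (Multiset.zero_le P), card_extend hle]
  push_cast
  ring

theorem coeff_decompositionGF (L : ℕ → ℕ) (n k : ℕ) :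
    (decompositionGF (X : ℤ[X]) L n).coeff k =
      ((decompositions L n).filter (·.card = k)).card := by
  simp only [decompositionGF, finsetSum_coeff, coeff_X_pow, eq_comm (a := k), Finset.sum_boole]

end GeneratingFunction

/-- The height function with peaks `1 + c i` at the positions `i ∈ I` and height `1` elsewhere. -/
def peakHeight (I : Finset ℕ) (c : ℕ → ℕ) (t : ℕ) : ℕ := if t ∈ I then 1 + c t else 1

section PeakHeight

variable {I : Finset ℕ} {c : ℕ → ℕ} {n : ℕ}

theorem peakHeight_of_mem (h : n ∈ I) : peakHeight I c n = 1 + c n := if_pos h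

theorem peakHeight_of_notMem (h : n ∉ I) : peakHeight I c n = 1 := if_neg h

theorem filter_lt_succ_of_mem (h : n ∈ I) :
    I.filter (· < n + 1) = insert n (I.filter (· < n)) := by
  grind

theorem filter_lt_succ_of_notMem (h : n ∉ I) : I.filter (· < n + 1) = I.filter (· < n) := by
  grind

-- The exponent `e` is `n - 1 - 2 * #{i ∈ I | i < n}`, expressed without truncated subtraction.
theorem decompositionGF_peakHeight {R : Type*} [CommSemiring R] (q : R) (hI : ∀ i ∈ I, 1 < i)
    (hnc : ∀ i ∈ I, i + 1 ∉ I) (hc : ∀ i ∈ I, 1 ≤ c i) (hn : 1 ≤ n) (hnI : n ∉ I) :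
    ∃ e, e + 2 * (I.filter (· < n)).card + 1 = n ∧
      decompositionGF q (peakHeight I c) n =
        q ^ (∑ i ∈ I.filter (· < n), c i + 1) * (1 + q) ^ e *
          (2 + 2 * q + q ^ 2) ^ (I.filter (· < n)).card := by
  induction n using Nat.strong_induction_on with
  | _ n ih =>
    rcases hn.eq_or_lt with rfl | hn
    · have hempty : I.filter (· < 1) = ∅ :=
        Finset.filter_eq_empty_iff.2 fun i hi => (hI i hi).not_gt
      rw [hempty, decompositionGF_one q (peakHeight_of_notMem hnI)]
      exact ⟨0, by simp⟩
    obtain ⟨k, rfl⟩ := Nat.exists_eq_add_of_le' hn.le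
    by_cases hk : k ∈ I
    · obtain ⟨j, rfl⟩ := Nat.exists_eq_add_of_le' (hI k hk).le
      have hj : j ∉ I := fun h => hnc j h hk
      have hj_pos : 1 ≤ j := Nat.lt_succ_iff.1 (hI _ hk)
      obtain ⟨e, he, hGF⟩ := ih j (by omega) hj_pos hj
      rw [filter_lt_succ_of_mem hk, filter_lt_succ_of_notMem hj,
        Finset.card_insert_of_notMem (by simp), Finset.sum_insert (by simp),
        decompositionGF_add_two_of_peak q hj_pos (hc _ hk) (peakHeight_of_notMem hj)
          (peakHeight_of_mem hk) (peakHeight_of_notMem hnI), hGF]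
      exact ⟨e, by omega, by ring⟩
    · obtain ⟨e, he, hGF⟩ := ih k (by omega) (by omega) hk
      rw [filter_lt_succ_of_notMem hk, decompositionGF_succ_of_flat q (by omega)
        (peakHeight_of_notMem hk) (peakHeight_of_notMem hnI), hGF]
      exact ⟨e + 1, by omega, by ring⟩

end PeakHeight

/-- The root `α[x.1, x.2]` of `B_r`, for an interval `x` in the sense of `IsInterval r`. -/
def intervalVec (r : ℕ) (x : ℕ × ℕ) : Fin r → ℕ :=
  fun t => if x.1 ≤ t.val + 1 ∧ t.val + 1 ≤ x.2 then 1 else 0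

section Roots

variable {r : ℕ} {L : ℕ → ℕ}

theorem sum_map_intervalVec (r : ℕ) (P : Multiset (ℕ × ℕ)) :
    (P.map (intervalVec r)).sum = fun t => coverage P (t.val + 1) := by
  funext t
  induction P using Multiset.induction_on with
  | empty => rfl
  | cons x P ih =>
    rw [Multiset.map_cons, Multiset.sum_cons, Pi.add_apply, ih, coverage, coverage,
      Multiset.countP_cons, add_comm, intervalVec]

theorem isIntervalDecomposition_iff_sum {P : Multiset (ℕ × ℕ)} :
    IsIntervalDecomposition L r P ↔
      (∀ x ∈ P, IsInterval r x) ∧ (P.map (intervalVec r)).sum = fun t => L (t.val + 1) := by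
  rw [sum_map_intervalVec, funext_iff]
  constructor
  · exact fun h => ⟨h.isInterval, fun t => h.coverage_eq _ (by omega) t.2⟩
  · refine fun ⟨hint, hsum⟩ => ⟨hint, fun t ht htr => ?_⟩
    simpa [Nat.sub_add_cancel ht] using hsum ⟨t - 1, by omega⟩

theorem intervalVec_injOn (r : ℕ) : Set.InjOn (intervalVec r) {x | IsInterval r x} := by
  have fst_le_and_le_snd {x y : ℕ × ℕ} (hx : IsInterval r x)
      (h : intervalVec r x = intervalVec r y) : y.1 ≤ x.1 ∧ x.2 ≤ y.2 := by
    obtain ⟨hx₁, hx₁₂, hx₂⟩ := hx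
    have hleft := congrFun h ⟨x.1 - 1, by omega⟩
    have hright := congrFun h ⟨x.2 - 1, by omega⟩
    grind [intervalVec]
  intro x hx y hy h
  have hxy := fst_le_and_le_snd hx h
  have hyx := fst_le_and_le_snd hy h.symm
  exact Prod.ext (by omega) (by omega)

theorem bijOn_intervalVec (r : ℕ) :
    Set.BijOn (intervalVec r) {x | IsInterval r x}
      {v | isPosRootB r v ∧ ∀ t : Fin r, t.val + 1 = r → v t ≤ 1} := by
  refine ⟨?_, intervalVec_injOn r, ?_⟩
  · rintro ⟨i, j⟩ ⟨hi, hij, hj⟩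
    exact ⟨Or.inl ⟨i, j, hi, hij, hj, rfl⟩, fun t _ => by grind [intervalVec]⟩
  · rintro v ⟨⟨i, j, hi, hij, hj, rfl⟩ | ⟨i, j, hi, hij, hj, rfl⟩, hlast⟩
    · exact ⟨(i, j), ⟨hi, hij, hj⟩, rfl⟩
    · have := hlast ⟨r - 1, by omega⟩ (Nat.sub_add_cancel (by omega))
      grind

theorem NB_eq_ncard_multiset (r k : ℕ) (lam : Fin r → ℕ) :
    NB r k lam = Set.ncard {Q : Multiset (Fin r → ℕ) |
      (∀ v ∈ Q, isPosRootB r v) ∧ Q.card = k ∧ Q.sum = lam} := by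
  classical
  have hsum (Q : Multiset (Fin r → ℕ)) : (Q.toFinsupp.sum fun v n => n • v) = Q.sum := by
    rw [Finset.sum_multiset_count Q]
    simp [Finsupp.sum]
  have hcard (Q : Multiset (Fin r → ℕ)) : (Q.toFinsupp.sum fun _ n => n) = Q.card :=
    Multiset.toFinsupp_sum_eq Q
  rw [NB, ← Set.ncard_preimage_of_injective_subset_range Multiset.toFinsupp.injective
    (fun m _ => Multiset.toFinsupp.surjective m)]
  simp only [Set.preimage_ofPred_eq, hsum, hcard, Multiset.toFinsupp_support, Multiset.mem_toFinset]

theorem NB_eq_card_decompositions (r k : ℕ) (hL : L r ≤ 1) :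
    NB r k (fun t => L (t.val + 1)) = ((decompositions L r).filter (·.card = k)).card := by
  let T : Set (Multiset (Fin r → ℕ)) := {Q | Q.card = k ∧ Q.sum = fun t => L (t.val + 1)}
  have hbij := (bijOn_multiset_map (bijOn_intervalVec r)).inter_mapsTo
    (s₂ := Multiset.map (intervalVec r) ⁻¹' T) (t₂ := T) (Set.mapsTo_preimage _ _)
    Set.inter_subset_right
  rw [NB_eq_ncard_multiset, ← Set.ncard_coe_finset]
  convert hbij.ncard_eq.symm using 2
  · ext Q
    refine ⟨fun ⟨hroot, hQ⟩ => ⟨fun v hv => ⟨hroot v hv, fun t ht => ?_⟩, hQ⟩,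
      fun ⟨hroot, hQ⟩ => ⟨fun v hv => (hroot v hv).1, hQ⟩⟩
    calc v t ≤ Q.sum t := Multiset.single_le_sum (fun _ _ => zero_le) v hv t
      _ = L (t.val + 1) := congrFun hQ.2 t
      _ ≤ 1 := by rwa [ht]
  · ext P
    simp only [T, Finset.coe_filter, mem_decompositions, isIntervalDecomposition_iff_sum,
      Set.mem_inter_iff, Set.mem_preimage, Set.mem_ofPred_eq, Multiset.card_map, and_assoc,
      and_comm (a := P.card = k)]

end Roots

theorem qAnalog_nonconsecutive_typeB_general (r : ℕ) (hr : 1 ≤ r) (I : Finset ℕ)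
    (hI : ∀ i ∈ I, 1 < i ∧ i < r) (hnc : ∀ i ∈ I, i + 1 ∉ I) (c : ℕ → ℕ) (hc : ∀ i ∈ I, 1 ≤ c i)
    (k : ℕ) :
    (NB r k (fun t => if t.val + 1 ∈ I then 1 + c (t.val + 1) else 1) : ℤ) =
      ((X : ℤ[X]) ^ (∑ i ∈ I, c i + 1) * (1 + X) ^ (r - 1 - 2 * I.card) *
        (2 + 2 * X + X ^ 2) ^ I.card).coeff k := by
  have hrI : r ∉ I := fun h => (hI r h).2.false
  have hfilter : I.filter (· < r) = I := Finset.filter_true_of_mem fun i hi => (hI i hi).2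
  obtain ⟨e, he, hGF⟩ :=
    decompositionGF_peakHeight (X : ℤ[X]) (fun i hi => (hI i hi).1) hnc hc hr hrI
  rw [hfilter] at he hGF
  rw [show r - 1 - 2 * I.card = e by omega, ← hGF, coeff_decompositionGF,
    ← NB_eq_card_decompositions r k (peakHeight_of_notMem hrI).le]
  rfl

/-- Proposition 3.4 (type B): for `λ = Σ α_i + Σ_j c_{i_j} α_{i_j}` with
`I = {i_1 < ⋯ < i_ℓ}` nonconsecutive, `1 < i_1`, `i_ℓ < r−2`, and positive
coefficients `c`, `℘_q(λ) = q^{m+1} (1+q)^{r−1−2ℓ} (2+2q+q²)^ℓ`. -/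
theorem qAnalog_nonconsecutive_typeB (r ℓ : ℕ) (hr : 5 ≤ r)
    (I : Finset ℕ) (hcard : I.card = ℓ)
    (hI : ∀ i ∈ I, 1 < i ∧ i < r - 2)
    (hnc : ∀ i ∈ I, ∀ j ∈ I, i < j → i + 2 ≤ j)
    (c : ℕ → ℕ) (hc : ∀ i ∈ I, 1 ≤ c i)
    (m : ℕ) (hm : m = ∑ i ∈ I, c i)
    (lam : Fin r → ℕ)
    (hlam : lam = fun t => if t.val + 1 ∈ I then 1 + c (t.val + 1) else 1) :
    ∀ k : ℕ, (NB r k lam : ℤ) =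
      ((X : ℤ[X]) ^ (m + 1) * (1 + X) ^ (r - 1 - 2 * ℓ) *
        (2 + 2 * X + X ^ 2) ^ ℓ).coeff k := by
  subst hcard hm hlam
  exact qAnalog_nonconsecutive_typeB_general r (by omega) I (fun i hi => by grind)
    (fun i hi hi' => by grind) c hc
end

section
/- Let r ≥ 5, let ℓ ≥ 0, and let I = {i_1 < i_2 < ⋯ < i_ℓ} be a set of nonconsecutive integers with 1 < i_1 and i_ℓ < r−2 (so i_{j+1} ≥ i_j + 2 for all j), and let c_{i_1},…,c_{i_ℓ} be positive integers. Let λ ∈ ℕ^r have i_j-th coordinate 1 + c_{i_j} for each j and all other coordinates 1. Then the total number of decompositions of λ as a sum of positive roots of A_r satisfies Σ_{k≥0} N_k(λ) = 2^{r−1−2ℓ}·5^ℓ (that is, 2^{r−1}·(5/4)^ℓ). -/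
/-!
Build a decomposition of a weight into intervals one position at a time. When position `n + 1` of
multiplicity `x` is added, one chooses which of the intervals ending at `n` are prolonged to
`n + 1`, at most `x` of them, and the remaining multiplicity is filled with copies of
`[n + 1, n + 1]`. The number of choices depends only on the intervals ending at `n`.

If position `n` has multiplicity one, a single interval ends there. A next position of multiplicity
one then doubles the number of decompositions. A next position of multiplicity `x ≥ 2` leaves one
left endpoint at `n + 1` (if nothing is prolonged) or two (otherwise), so that a further position of
multiplicity one can be added in `2` or in `3` ways: the two positions together multiply the number
of decompositions by `2 + 3 = 5`.
-/

open Polynomial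

/-- The positive roots of the Lie algebra of type `A_r` in simple-root coordinates:
the indicator vectors `α[i,j]` of the intervals `[i,j]` for `1 ≤ i ≤ j ≤ r`
(positions are `1`-based, so position `i` corresponds to `t : Fin r` with `t.val + 1 = i`). -/
def isPosRootA (r : ℕ) (v : Fin r → ℕ) : Prop :=
  ∃ i j : ℕ, 1 ≤ i ∧ i ≤ j ∧ j ≤ r ∧
    v = fun t => if i ≤ t.val + 1 ∧ t.val + 1 ≤ j then 1 else 0

/-- `NA r k ξ` is the number of decompositions of the weight `ξ` as a sum of exactly `k`
positive roots of `A_r`, i.e. the number of `ℕ`-valued functions (with finite support)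
on the set of positive roots whose values sum to `k` and whose weighted vector sum is `ξ`. -/
noncomputable def NA (r k : ℕ) (ξ : Fin r → ℕ) : ℕ :=
  Set.ncard {m : (Fin r → ℕ) →₀ ℕ |
    (∀ v ∈ m.support, isPosRootA r v) ∧
    (m.sum fun _ n => n) = k ∧
    (m.sum fun v n => n • v) = ξ}

/-- The interval `[i, j]` as an element of the root lattice of type `A`, i.e. the root `α[i,j]`
with all coordinates in `ℕ` at once; it is `0` when `j < i`. -/
noncomputable def intervalRoot (i j : ℕ) : ℕ →₀ ℕ :=
  ∑ t ∈ Finset.Icc i j, Finsupp.single t 1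

/-- The weight of a family of intervals. A family is encoded by its multiplicities, with right
endpoints first: `m j i` is the multiplicity of `[i, j]`, so that `m j` collects the left endpoints
of the intervals ending at `j`. -/
noncomputable def intervalWeight : (ℕ →₀ ℕ →₀ ℕ) →+ (ℕ →₀ ℕ) :=
  Finsupp.liftAddHom fun j => Finsupp.weight fun i => intervalRoot i j

theorem intervalRoot_apply (i j t : ℕ) :
    intervalRoot i j t = if i ≤ t ∧ t ≤ j then 1 else 0 := by
  simp [intervalRoot, Finsupp.finsetSum_apply, Finsupp.single_apply]

theorem intervalRoot_succ {i j : ℕ} (h : i ≤ j + 1) :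
    intervalRoot i (j + 1) = intervalRoot i j + Finsupp.single (j + 1) 1 :=
  Finset.sum_Icc_succ_top h _

theorem intervalRoot_of_lt {i j : ℕ} (h : j < i) : intervalRoot i j = 0 := by
  rw [intervalRoot, Finset.Icc_eq_empty_of_lt h, Finset.sum_empty]

theorem intervalWeight_single (j : ℕ) (s : ℕ →₀ ℕ) :
    intervalWeight (Finsupp.single j s) = s.sum fun i k => k • intervalRoot i j := by
  rw [intervalWeight, Finsupp.liftAddHom_apply_single, Finsupp.weight_apply]

theorem intervalWeight_apply (m : ℕ →₀ ℕ →₀ ℕ) (t : ℕ) :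
    intervalWeight m t = m.sum fun j s => s.sum fun i k => k • intervalRoot i j t := by
  simp [intervalWeight, Finsupp.weight_apply, Finsupp.sum_apply]

theorem intervalWeight_single_succ {j : ℕ} {s : ℕ →₀ ℕ} (hs : ∀ i, j + 1 < i → s i = 0) :
    intervalWeight (Finsupp.single (j + 1) s) =
      intervalWeight (Finsupp.single j s) + Finsupp.single (j + 1) s.degree := by
  have hle : ∀ i ∈ s.support, i ≤ j + 1 := fun i hi =>
    not_lt.mp fun h => Finsupp.mem_support_iff.mp hi (hs i h)
  rw [intervalWeight_single, intervalWeight_single, Finsupp.degree_apply, Finsupp.single_finsetSum,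
    Finsupp.sum, Finsupp.sum, ← Finset.sum_add_distrib]
  refine Finset.sum_congr rfl fun i hi => ?_
  rw [intervalRoot_succ (hle i hi), smul_add, Finsupp.smul_single_one]

theorem le_intervalWeight (m : ℕ →₀ ℕ →₀ ℕ) {i j t : ℕ} (hit : i ≤ t) (htj : t ≤ j) :
    m j i ≤ intervalWeight m t := by
  have hle : Finsupp.single j (Finsupp.single i (m j i)) ≤ m := by
    rw [Finsupp.single_le_iff, Finsupp.single_le_iff]
  rw [← add_tsub_cancel_of_le hle, map_add, intervalWeight_single]
  simp [intervalRoot_apply, hit, htj]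

theorem intervalWeight_eq_zero {m : ℕ →₀ ℕ →₀ ℕ} {t : ℕ} (h : ∀ j, t ≤ j → m j = 0) :
    intervalWeight m t = 0 := by
  rw [intervalWeight_apply]
  refine Finset.sum_eq_zero fun j hj => Finset.sum_eq_zero fun i _ => ?_
  have hjt : j < t := not_le.mp fun hle => Finsupp.mem_support_iff.mp hj (h j hle)
  simp only [intervalRoot_apply, hjt.not_ge, and_false, if_false, smul_zero]

theorem finite_setOf_intervalWeight_eq (μ : ℕ →₀ ℕ) :
    {m : ℕ →₀ ℕ →₀ ℕ | (∀ j i, j < i → m j i = 0) ∧ intervalWeight m = μ}.Finite := by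
  refine (Set.finite_Iic (∑ j ∈ μ.support, Finsupp.single j
    (∑ i ∈ Finset.Iic j, Finsupp.single i (μ j)))).subset ?_
  rintro m ⟨hm, rfl⟩ j i
  rcases lt_or_ge j i with hji | hij
  · exact (hm j i hji).trans_le (Nat.zero_le _)
  · have hle : m j i ≤ intervalWeight m j := le_intervalWeight m hij le_rfl
    by_cases h0 : intervalWeight m j = 0
    · exact (Nat.le_zero.mp (h0 ▸ hle)).trans_le (Nat.zero_le _)
    · simpa [Finsupp.finsetSum_apply, Finsupp.single_apply, h0, hij] using hle

/-- The decompositions of `μ` into nonempty intervals. -/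
noncomputable def intervalDecompositions (μ : ℕ →₀ ℕ) : Finset (ℕ →₀ ℕ →₀ ℕ) :=
  (finite_setOf_intervalWeight_eq μ).toFinset

theorem mem_intervalDecompositions {μ : ℕ →₀ ℕ} {m : ℕ →₀ ℕ →₀ ℕ} :
    m ∈ intervalDecompositions μ ↔ (∀ j i, j < i → m j i = 0) ∧ intervalWeight m = μ :=
  Set.Finite.mem_toFinset _

theorem column_eq_zero {μ : ℕ →₀ ℕ} {m : ℕ →₀ ℕ →₀ ℕ} (hm : m ∈ intervalDecompositions μ) {j : ℕ}
    (hj : μ j = 0) : m j = 0 := by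
  obtain ⟨hlt, rfl⟩ := mem_intervalDecompositions.mp hm
  ext i
  rcases lt_or_ge j i with h | h
  · exact hlt j i h
  · exact Nat.le_zero.mp (hj ▸ le_intervalWeight m h le_rfl)

theorem degree_lastColumn {μ : ℕ →₀ ℕ} {m : ℕ →₀ ℕ →₀ ℕ} (hm : m ∈ intervalDecompositions μ) {n : ℕ}
    (hμ : ∀ t, n < t → μ t = 0) : (m n).degree = μ n := by
  obtain ⟨hlt, rfl⟩ := mem_intervalDecompositions.mp hm
  have herase : intervalWeight (m.erase n) n = 0 := intervalWeight_eq_zero fun j hj => by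
    rcases hj.eq_or_lt with rfl | h
    · exact Finsupp.erase_same
    · rw [Finsupp.erase_ne h.ne', column_eq_zero hm (hμ j h)]
  conv_rhs => rw [← Finsupp.single_add_erase n m, map_add, Finsupp.add_apply, herase, add_zero,
    intervalWeight_single, Finsupp.sum_apply]
  refine Finset.sum_congr rfl fun i hi => ?_
  have hin : i ≤ n := not_lt.mp fun h => Finsupp.mem_support_iff.mp hi (hlt n i h)
  simp [intervalRoot_apply, hin]

/-- Appends a position of multiplicity `x` after position `n`: the intervals `[i, n]` counted by `S`
are prolonged to `[i, n + 1]`, and copies of `[n + 1, n + 1]` supply the missing multiplicity. -/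
noncomputable def appendPosition (n x : ℕ) (m : ℕ →₀ ℕ →₀ ℕ) (S : ℕ →₀ ℕ) : ℕ →₀ ℕ →₀ ℕ :=
  m - Finsupp.single n S + Finsupp.single (n + 1) (S + Finsupp.single (n + 1) (x - S.degree))

/-- Deletes the position `n + 1`: the intervals `[i, n + 1]` are shortened to `[i, n]`, and the
copies of `[n + 1, n + 1]` disappear. -/
noncomputable def removePosition (n : ℕ) (m : ℕ →₀ ℕ →₀ ℕ) : ℕ →₀ ℕ →₀ ℕ :=
  m.erase (n + 1) + Finsupp.single n ((m (n + 1)).erase (n + 1))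

theorem intervalWeight_removePosition_add {n : ℕ} {m : ℕ →₀ ℕ →₀ ℕ}
    (hm : ∀ i, n + 1 < i → m (n + 1) i = 0) :
    intervalWeight (removePosition n m) + Finsupp.single (n + 1) (m (n + 1)).degree =
      intervalWeight m := by
  have hnew : ∀ c, intervalWeight (Finsupp.single n (Finsupp.single (n + 1) c)) = 0 := fun c => by
    simp [intervalWeight_single, intervalRoot_of_lt]
  have hcol : intervalWeight (Finsupp.single n ((m (n + 1)).erase (n + 1))) =
      intervalWeight (Finsupp.single n (m (n + 1))) := by
    conv_rhs => rw [← Finsupp.single_add_erase (n + 1) (m (n + 1)), Finsupp.single_add, map_add,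
      hnew, zero_add]
  rw [removePosition, map_add, hcol, add_assoc, ← intervalWeight_single_succ hm, ← map_add,
    Finsupp.erase_add_single]

theorem appendPosition_apply_succ {n : ℕ} {m : ℕ →₀ ℕ →₀ ℕ} (hm : m (n + 1) = 0) (x : ℕ)
    (S : ℕ →₀ ℕ) :
    appendPosition n x m S (n + 1) = S + Finsupp.single (n + 1) (x - S.degree) := by
  simp [appendPosition, hm]

theorem erase_appendPosition_apply_succ {n : ℕ} {m : ℕ →₀ ℕ →₀ ℕ} {S : ℕ →₀ ℕ} (hm : m (n + 1) = 0)
    (hS : S (n + 1) = 0) (x : ℕ) : (appendPosition n x m S (n + 1)).erase (n + 1) = S := by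
  rw [appendPosition_apply_succ hm, Finsupp.erase_add, Finsupp.erase_single, add_zero,
    Finsupp.erase_of_notMem_support (by simp [hS])]

theorem removePosition_appendPosition {n : ℕ} {m : ℕ →₀ ℕ →₀ ℕ} {S : ℕ →₀ ℕ} (hm : m (n + 1) = 0)
    (hS : S ≤ m n) (hSn : S (n + 1) = 0) (x : ℕ) :
    removePosition n (appendPosition n x m S) = m := by
  have herase : (appendPosition n x m S).erase (n + 1) = m - Finsupp.single n S := by
    rw [appendPosition, Finsupp.erase_add, Finsupp.erase_single, add_zero,
      Finsupp.erase_of_notMem_support (by simp [hm])]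
  rw [removePosition, herase, erase_appendPosition_apply_succ hm hSn,
    tsub_add_cancel_of_le (Finsupp.single_le_iff.mpr hS)]

theorem appendPosition_removePosition {n x : ℕ} {m : ℕ →₀ ℕ →₀ ℕ} (hx : (m (n + 1)).degree = x) :
    appendPosition n x (removePosition n m) ((m (n + 1)).erase (n + 1)) = m := by
  have hnew : x - ((m (n + 1)).erase (n + 1)).degree = m (n + 1) (n + 1) := by
    conv_lhs => rw [← hx, ← Finsupp.single_add_erase (n + 1) (m (n + 1)), map_add,
      Finsupp.degree_single]
    simp
  rw [appendPosition, removePosition, add_tsub_cancel_right, hnew, Finsupp.erase_add_single,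
    Finsupp.erase_add_single]

section AppendPosition

variable {μ : ℕ →₀ ℕ} {n : ℕ} (hμ : ∀ t, n < t → μ t = 0)
include hμ

theorem add_single_eq_zero_of_lt (x : ℕ) {t : ℕ} (ht : n + 1 < t) :
    (μ + Finsupp.single (n + 1) x) t = 0 := by
  simp [hμ t (by lia), ht.ne]

theorem degree_lastColumn_add_single {x : ℕ} {m : ℕ →₀ ℕ →₀ ℕ}
    (hm : m ∈ intervalDecompositions (μ + Finsupp.single (n + 1) x)) :
    (m (n + 1)).degree = x := by
  rw [degree_lastColumn hm fun _ => add_single_eq_zero_of_lt hμ x]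
  simp [hμ]

theorem removePosition_mem {x : ℕ} {m : ℕ →₀ ℕ →₀ ℕ}
    (hm : m ∈ intervalDecompositions (μ + Finsupp.single (n + 1) x)) :
    removePosition n m ∈ intervalDecompositions μ := by
  obtain ⟨hlt, hw⟩ := mem_intervalDecompositions.mp hm
  refine mem_intervalDecompositions.mpr ⟨fun j i hji => ?_, ?_⟩
  · have hprolonged : Finsupp.single n ((m (n + 1)).erase (n + 1)) j i = 0 := by
      rcases eq_or_ne j n with rfl | hj
      · rcases eq_or_ne i (j + 1) with rfl | hi
        · simp
        · simp [hi, hlt (j + 1) i (by lia)]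
      · simp [hj]
    have hkept : m.erase (n + 1) j i = 0 := by
      rcases eq_or_ne j (n + 1) with rfl | hj
      · simp
      · rw [Finsupp.erase_ne hj, hlt j i hji]
    rw [removePosition, Finsupp.add_apply, Finsupp.add_apply, hkept, hprolonged]
  · rw [← intervalWeight_removePosition_add (hlt (n + 1)), degree_lastColumn_add_single hμ hm] at hw
    exact add_right_cancel hw

theorem appendPosition_mem {m : ℕ →₀ ℕ →₀ ℕ} (hm : m ∈ intervalDecompositions μ) {S : ℕ →₀ ℕ}
    (hS : S ≤ m n) {x : ℕ} (hx : S.degree ≤ x) :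
    appendPosition n x m S ∈ intervalDecompositions (μ + Finsupp.single (n + 1) x) := by
  obtain ⟨hlt, hw⟩ := mem_intervalDecompositions.mp hm
  have hcol : m (n + 1) = 0 := column_eq_zero hm (hμ _ n.lt_succ_self)
  have hS0 : ∀ i, n < i → S i = 0 := fun i hi => Nat.le_zero.mp (hlt n i hi ▸ hS i)
  have hlt' : ∀ j i, j < i → appendPosition n x m S j i = 0 := fun j i hji => by
    rcases eq_or_ne j (n + 1) with rfl | hj
    · simp [appendPosition_apply_succ hcol, hS0 i (by lia), hji.ne']
    · simp [appendPosition, hj, hlt j i hji]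
  have hdeg : (appendPosition n x m S (n + 1)).degree = x := by
    rw [appendPosition_apply_succ hcol, map_add, Finsupp.degree_single, add_tsub_cancel_of_le hx]
  refine mem_intervalDecompositions.mpr ⟨hlt', ?_⟩
  rw [← intervalWeight_removePosition_add (hlt' (n + 1)), hdeg,
    removePosition_appendPosition hcol hS (hS0 _ n.lt_succ_self), hw]

end AppendPosition

/-- The families of intervals `[i, n]` that can be prolonged to `[i, n + 1]` when these intervals
have multiplicities `s i` and position `n + 1` has multiplicity `x`. -/
noncomputable def prolongable (s : ℕ →₀ ℕ) (x : ℕ) : Finset (ℕ →₀ ℕ) :=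
  {S ∈ Finset.Iic s | S.degree ≤ x}

theorem mem_prolongable {s S : ℕ →₀ ℕ} {x : ℕ} : S ∈ prolongable s x ↔ S ≤ s ∧ S.degree ≤ x := by
  rw [prolongable, Finset.mem_filter, Finset.mem_Iic]

theorem sum_intervalDecompositions_add_single {M : Type*} [AddCommMonoid M] {μ : ℕ →₀ ℕ} {n : ℕ}
    (hμ : ∀ t, n < t → μ t = 0) (x : ℕ) (f : (ℕ →₀ ℕ) → M) :
    ∑ m ∈ intervalDecompositions (μ + Finsupp.single (n + 1) x), f (m (n + 1)) =
      ∑ m ∈ intervalDecompositions μ, ∑ S ∈ prolongable (m n) x,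
        f (S + Finsupp.single (n + 1) (x - S.degree)) := by
  have hcol : ∀ m ∈ intervalDecompositions μ, m (n + 1) = 0 := fun m hm =>
    column_eq_zero hm (hμ _ n.lt_succ_self)
  rw [Finset.sum_sigma', eq_comm]
  refine Finset.sum_bij' (fun p _ => appendPosition n x p.1 p.2)
    (fun m _ => ⟨removePosition n m, (m (n + 1)).erase (n + 1)⟩) ?_ ?_ ?_ ?_ ?_
  · rintro ⟨m, S⟩ hp
    obtain ⟨hm, hS⟩ := Finset.mem_sigma.mp hp
    obtain ⟨hle, hdeg⟩ := mem_prolongable.mp hS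
    exact appendPosition_mem hμ hm hle hdeg
  · intro m hm
    have hle : (m (n + 1)).erase (n + 1) ≤ m (n + 1) :=
      le_self_add.trans_eq (Finsupp.erase_add_single _ _)
    refine Finset.mem_sigma.mpr ⟨removePosition_mem hμ hm, mem_prolongable.mpr ⟨?_, ?_⟩⟩
    · simp [removePosition]
    · exact (Finsupp.degree_mono hle).trans_eq (degree_lastColumn_add_single hμ hm)
  · rintro ⟨m, S⟩ hp
    obtain ⟨hm, hS⟩ := Finset.mem_sigma.mp hp
    have hle := (mem_prolongable.mp hS).1
    have hS0 : S (n + 1) = 0 :=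
      Nat.le_zero.mp ((mem_intervalDecompositions.mp hm).1 n _ n.lt_succ_self ▸ hle (n + 1))
    exact Sigma.ext (removePosition_appendPosition (hcol m hm) hle hS0 x)
      (heq_of_eq (erase_appendPosition_apply_succ (hcol m hm) hS0 x))
  · intro m hm
    exact appendPosition_removePosition (degree_lastColumn_add_single hμ hm)
  · rintro ⟨m, S⟩ hp
    rw [appendPosition_apply_succ (hcol m (Finset.mem_sigma.mp hp).1)]

theorem card_intervalDecompositions_add_single {μ : ℕ →₀ ℕ} {n : ℕ} (hμ : ∀ t, n < t → μ t = 0)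
    (x : ℕ) :
    (intervalDecompositions (μ + Finsupp.single (n + 1) x)).card =
      ∑ m ∈ intervalDecompositions μ, (prolongable (m n) x).card := by
  simpa using sum_intervalDecompositions_add_single hμ x fun _ => (1 : ℕ)

theorem degree_eq_one_iff_exists_single {s : ℕ →₀ ℕ} :
    s.degree = 1 ↔ ∃ k, Finsupp.single k 1 = s :=
  (Set.ext_iff.mp Finsupp.range_single_one s).symm

theorem prolongable_one (s : ℕ →₀ ℕ) :
    prolongable s 1 = insert 0 (s.support.image fun i => Finsupp.single i 1) := by
  ext S
  rw [mem_prolongable, Nat.le_one_iff_eq_zero_or_eq_one, Finsupp.degree_eq_zero_iff,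
    degree_eq_one_iff_exists_single, Finset.mem_insert, Finset.mem_image]
  constructor
  · rintro ⟨hle, rfl | ⟨i, rfl⟩⟩
    · exact Or.inl rfl
    · exact Or.inr ⟨i, Finsupp.mem_support_iff.mpr
        (Nat.one_le_iff_ne_zero.mp (Finsupp.single_le_iff.mp hle)), rfl⟩
  · rintro (rfl | ⟨i, hi, rfl⟩)
    · exact ⟨zero_le, Or.inl rfl⟩
    · exact ⟨Finsupp.single_le_iff.mpr (Nat.one_le_iff_ne_zero.mpr (Finsupp.mem_support_iff.mp hi)),
        Or.inr ⟨i, rfl⟩⟩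

theorem card_prolongable_one (s : ℕ →₀ ℕ) : (prolongable s 1).card = s.support.card + 1 := by
  rw [prolongable_one, Finset.card_insert_of_notMem (by simp),
    Finset.card_image_of_injective _ (Finsupp.single_left_injective one_ne_zero)]

theorem prolongable_single_one (k : ℕ) {x : ℕ} (hx : 1 ≤ x) :
    prolongable (Finsupp.single k 1) x = {0, Finsupp.single k 1} := by
  have hone : prolongable (Finsupp.single k 1) x = prolongable (Finsupp.single k 1) 1 := by
    ext S
    simp only [mem_prolongable]
    refine and_congr_right fun hle => ?_
    have hdeg : S.degree ≤ 1 := by simpa using Finsupp.degree_mono hle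
    exact ⟨fun _ => hdeg, fun h => h.trans hx⟩
  rw [hone, prolongable_one, Finsupp.support_single k one_ne_zero, Finset.image_singleton]

section AfterMultiplicityOne

variable {μ : ℕ →₀ ℕ} {n : ℕ} (hμ : ∀ t, n < t → μ t = 0) (hone : μ n = 1)
include hμ hone

theorem lastColumn_eq_single {m : ℕ →₀ ℕ →₀ ℕ} (hm : m ∈ intervalDecompositions μ) :
    ∃ k ≤ n, m n = Finsupp.single k 1 := by
  obtain ⟨k, hk⟩ := degree_eq_one_iff_exists_single.mp ((degree_lastColumn hm hμ).trans hone)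
  refine ⟨k, not_lt.mp fun hlt => ?_, hk.symm⟩
  simpa [← hk] using (mem_intervalDecompositions.mp hm).1 n k hlt

theorem card_intervalDecompositions_add_one :
    (intervalDecompositions (μ + Finsupp.single (n + 1) 1)).card =
      (intervalDecompositions μ).card * 2 := by
  rw [card_intervalDecompositions_add_single hμ]
  refine Finset.sum_const_nat fun m hm => ?_
  obtain ⟨k, -, hk⟩ := lastColumn_eq_single hμ hone hm
  rw [hk, card_prolongable_one, Finsupp.support_single k one_ne_zero,
    Finset.card_singleton]

theorem card_intervalDecompositions_add_add_one {x : ℕ} (hx : 2 ≤ x) :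
    (intervalDecompositions (μ + Finsupp.single (n + 1) x + Finsupp.single (n + 2) 1)).card =
      (intervalDecompositions μ).card * 5 := by
  rw [card_intervalDecompositions_add_single fun _ => add_single_eq_zero_of_lt hμ x]
  simp only [card_prolongable_one]
  rw [sum_intervalDecompositions_add_single hμ x fun s => s.support.card + 1]
  refine Finset.sum_const_nat fun m hm => ?_
  obtain ⟨k, hkn, hk⟩ := lastColumn_eq_single hμ hone hm
  have hnone : (Finsupp.single (n + 1) x).support.card = 1 := by
    rw [Finsupp.support_single _ (by lia), Finset.card_singleton]
  have hprolonged : (Finsupp.single k 1 + Finsupp.single (n + 1) (x - 1)).support.card = 2 := by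
    rw [Finsupp.support_single_add_single (by lia) one_ne_zero (by lia), Finset.card_pair (by lia)]
  rw [hk, prolongable_single_one k (one_le_two.trans hx),
    Finset.sum_pair (Finsupp.single_ne_zero.mpr one_ne_zero).symm, map_zero, tsub_zero, zero_add,
    Finsupp.degree_single, hnone, hprolonged]

end AfterMultiplicityOne

/-- The weight `∑ L t α_t` summed over the positions `1 ≤ t ≤ n`. -/
noncomputable def truncation (L : ℕ → ℕ) (n : ℕ) : ℕ →₀ ℕ :=
  ∑ t ∈ Finset.Icc 1 n, Finsupp.single t (L t)

theorem truncation_apply (L : ℕ → ℕ) (n t : ℕ) :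
    truncation L n t = if 1 ≤ t ∧ t ≤ n then L t else 0 := by
  simp [truncation, Finsupp.finsetSum_apply, Finsupp.single_apply]

theorem truncation_succ (L : ℕ → ℕ) (n : ℕ) :
    truncation L (n + 1) = truncation L n + Finsupp.single (n + 1) (L (n + 1)) :=
  Finset.sum_Icc_succ_top (Nat.le_add_left 1 n) _

theorem truncation_of_lt (L : ℕ → ℕ) {n t : ℕ} (h : n < t) : truncation L n t = 0 := by
  simp [truncation_apply, h.not_ge]

theorem truncation_self (L : ℕ → ℕ) (n : ℕ) : truncation L (n + 1) (n + 1) = L (n + 1) := by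
  simp [truncation_apply]

theorem card_intervalDecompositions_zero : (intervalDecompositions 0).card = 1 := by
  refine Finset.card_eq_one.mpr ⟨0, Finset.ext fun m => ?_⟩
  rw [Finset.mem_singleton]
  refine ⟨fun hm => Finsupp.ext fun j => column_eq_zero hm rfl, ?_⟩
  rintro rfl
  exact mem_intervalDecompositions.mpr ⟨fun _ _ _ => rfl, map_zero _⟩

theorem card_intervalDecompositions_truncation_one {L : ℕ → ℕ} (hL : L 1 = 1) :
    (intervalDecompositions (truncation L 1)).card = 1 := by
  have h0 : truncation L 0 = 0 := by simp [truncation]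
  rw [truncation_succ, h0, card_intervalDecompositions_add_single fun _ _ => rfl]
  simp only [hL, zero_add, card_prolongable_one]
  rw [Finset.sum_congr rfl fun m hm => by rw [column_eq_zero hm rfl]]
  simp [card_intervalDecompositions_zero]

theorem card_intervalDecompositions_truncation {I : Finset ℕ} {L : ℕ → ℕ}
    (hpos : ∀ i ∈ I, 1 < i) (hnc : ∀ i ∈ I, i + 1 ∉ I) (hL : ∀ i ∉ I, L i = 1)
    (hLI : ∀ i ∈ I, 2 ≤ L i) (n : ℕ) (hn : n + 1 ∉ I) :
    ∃ k, n = k + 2 * Nat.count (· ∈ I) (n + 1) ∧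
      (intervalDecompositions (truncation L (n + 1))).card =
        2 ^ k * 5 ^ Nat.count (· ∈ I) (n + 1) := by
  induction n using Nat.strong_induction_on with
  | h n ih =>
    rcases n with _ | n
    · refine ⟨0, ?_⟩
      have hzero : 0 ∉ I := fun h => absurd (hpos 0 h) (by lia)
      simp [Nat.count_succ, hzero, card_intervalDecompositions_truncation_one (hL 1 hn)]
    by_cases hI : n + 1 ∈ I
    · obtain ⟨n, rfl⟩ : ∃ n', n = n' + 1 := Nat.exists_eq_add_one_of_ne_zero
        (Nat.succ_lt_succ_iff.mp (hpos _ hI)).ne'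
      have hnI : n + 1 ∉ I := fun h => hnc _ h hI
      obtain ⟨k, hk, hcard⟩ := ih n (by lia) hnI
      have hcount : Nat.count (· ∈ I) (n + 2 + 1) = Nat.count (· ∈ I) (n + 1) + 1 := by
        simp [Nat.count_succ, hnI, hI]
      refine ⟨k, by lia, ?_⟩
      rw [truncation_succ, truncation_succ, hL _ hn,
        card_intervalDecompositions_add_add_one (fun _ => truncation_of_lt L)
          ((truncation_self L n).trans (hL _ hnI)) (hLI _ hI), hcard, hcount, pow_succ, mul_assoc]
    · obtain ⟨k, hk, hcard⟩ := ih n (by lia) hI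
      have hcount : Nat.count (· ∈ I) (n + 1 + 1) = Nat.count (· ∈ I) (n + 1) := by
        simp [Nat.count_succ _ (n + 1), hI]
      refine ⟨k + 1, by lia, ?_⟩
      rw [truncation_succ, hL _ hn,
        card_intervalDecompositions_add_one (fun _ => truncation_of_lt L)
          ((truncation_self L n).trans (hL _ hI)), hcard, hcount, pow_succ]
      ring

/-- The root `α[i, j]` of `A_r` in simple-root coordinates, indexed as `p = (j, i)` to match the
encoding of families of intervals. -/
def typeARoot (r : ℕ) (p : ℕ × ℕ) : Fin r → ℕ :=
  fun t => if p.2 ≤ t.val + 1 ∧ t.val + 1 ≤ p.1 then 1 else 0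

/-- The pairs `(j, i)` that index the positive roots `α[i, j]` of `A_r`. -/
def rootIndices (r : ℕ) : Set (ℕ × ℕ) :=
  {p | 1 ≤ p.2 ∧ p.2 ≤ p.1 ∧ p.1 ≤ r}

theorem typeARoot_eq_intervalRoot {r : ℕ} (p : ℕ × ℕ) (t : Fin r) :
    typeARoot r p t = intervalRoot p.2 p.1 (t.val + 1) := by
  rw [intervalRoot_apply, typeARoot]

theorem typeARoot_injOn (r : ℕ) : Set.InjOn (typeARoot r) (rootIndices r) := by
  rintro ⟨j, i⟩ ⟨hi, hij, hjr⟩ ⟨j', i'⟩ ⟨hi', hij', hjr'⟩ h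
  have hmem : ∀ t, 1 ≤ t → t ≤ r → ((i ≤ t ∧ t ≤ j) ↔ (i' ≤ t ∧ t ≤ j')) := fun t h1 htr => by
    have ht := congrFun h ⟨t - 1, by lia⟩
    simp only [typeARoot, Nat.sub_add_cancel h1] at ht
    split_ifs at ht <;> tauto
  have hii' := hmem i hi (hij.trans hjr)
  have hjj' := hmem j (hi.trans hij) hjr
  have hi'i := hmem i' hi' (hij'.trans hjr')
  have hj'j := hmem j' (hi'.trans hij') hjr'
  ext <;> lia

theorem typeARoot_bijOn (r : ℕ) :
    Set.BijOn (typeARoot r) (rootIndices r) {v | isPosRootA r v} := by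
  refine ⟨?_, typeARoot_injOn r, ?_⟩
  · rintro ⟨j, i⟩ ⟨hi, hij, hjr⟩
    exact ⟨i, j, hi, hij, hjr, rfl⟩
  · rintro v ⟨i, j, hi, hij, hjr, rfl⟩
    exact ⟨(j, i), ⟨hi, hij, hjr⟩, rfl⟩

theorem mapDomain_bijOn_of_bijOn {α β M : Type*} [AddCommMonoid M] {f : α → β} {s : Set α}
    {t : Set β} (hf : Set.BijOn f s t) :
    Set.BijOn (Finsupp.mapDomain f : (α →₀ M) → β →₀ M) {x | ↑x.support ⊆ s}
      {y | ↑y.support ⊆ t} := by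
  have himage : Finsupp.mapDomain f '' {x : α →₀ M | ↑x.support ⊆ s} = {y | ↑y.support ⊆ t} := by
    rw [← hf.image_eq]
    exact congrArg SetLike.coe (Finsupp.lmapDomain_supported M ℕ f s)
  exact himage ▸ (Finsupp.mapDomain_injOn s hf.injOn).bijOn_image

theorem sum_mapDomain_typeARoot (r : ℕ) (m : ℕ →₀ ℕ →₀ ℕ) :
    ((m.uncurry.mapDomain (typeARoot r)).sum fun v n => n • v) =
      fun t : Fin r => intervalWeight m (t.val + 1) := by
  refine (Finsupp.sum_mapDomain_index (fun v => zero_smul ℕ v)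
    fun v a b => add_smul a b v).trans ?_
  ext t
  rw [Finsupp.sum_uncurry_index, intervalWeight_apply]
  simp only [Finsupp.sum, Finset.sum_apply, Pi.smul_apply, typeARoot_eq_intervalRoot]

theorem mem_intervalDecompositions_truncation {r : ℕ} {L : ℕ → ℕ} {m : ℕ →₀ ℕ →₀ ℕ} :
    m ∈ intervalDecompositions (truncation L r) ↔ ↑m.uncurry.support ⊆ rootIndices r ∧
      ∀ t : Fin r, intervalWeight m (t.val + 1) = L (t.val + 1) := by
  constructor
  · intro hm
    obtain ⟨hlt, hw⟩ := mem_intervalDecompositions.mp hm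
    refine ⟨fun ⟨j, i⟩ hp => ?_, fun t => by simp [hw, truncation_apply, t.isLt]⟩
    have hne : m j i ≠ 0 := (Finsupp.mem_support_iff (f := m.uncurry)).mp hp
    refine ⟨Nat.one_le_iff_ne_zero.mpr ?_, not_lt.mp fun hji => hne (hlt j i hji),
      not_lt.mp fun hrj => hne ?_⟩
    · rintro rfl
      exact hne (Nat.le_zero.mp ((le_intervalWeight m le_rfl zero_le).trans_eq
        (by rw [hw, truncation_apply, if_neg (by simp)])))
    · rw [column_eq_zero hm (truncation_of_lt L hrj), Finsupp.zero_apply]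
  · rintro ⟨hsupp, hw⟩
    have hindex : ∀ j i, m j i ≠ 0 → 1 ≤ i ∧ i ≤ j ∧ j ≤ r := fun j i hne =>
      hsupp (a := (j, i)) (Finsupp.mem_support_iff.mpr hne)
    refine mem_intervalDecompositions.mpr ⟨fun j i hji => ?_, Finsupp.ext fun t => ?_⟩
    · by_contra hne
      exact hji.not_ge (hindex j i hne).2.1
    · rw [truncation_apply]
      split_ifs with ht
      · simpa [Nat.sub_add_cancel ht.1] using hw ⟨t - 1, by lia⟩
      · rw [intervalWeight_apply]
        refine Finset.sum_eq_zero fun j _ => Finset.sum_eq_zero fun i hi => ?_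
        have hij := hindex j i (Finsupp.mem_support_iff.mp hi)
        exact smul_eq_zero_of_right _ ((intervalRoot_apply i j t).trans (if_neg (by lia)))

theorem tsum_ncard_fiber {α β : Type*} {s : Set α} (hs : s.Finite) (f : α → β) :
    ∑' k, {x ∈ s | f x = k}.ncard = s.ncard := by
  classical
  lift s to Finset α using hs
  have hfiber : ∀ k, {x ∈ (s : Set α) | f x = k}.ncard = {x ∈ s | f x = k}.card := fun k => by
    rw [← Set.ncard_coe_finset, Finset.coe_filter]; rfl
  simp only [hfiber, Set.ncard_coe_finset]
  rw [Finset.card_eq_sum_card_image f s]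
  refine tsum_eq_sum fun k hk => ?_
  rw [Finset.card_eq_zero, Finset.filter_eq_empty_iff]
  exact fun x hx hxk => hk (Finset.mem_image.mpr ⟨x, hx, hxk⟩)

theorem tsum_NA_eq_card {r : ℕ} {L : ℕ → ℕ} {ξ : Fin r → ℕ} (hξ : ∀ t, ξ t = L (t.val + 1)) :
    ∑' k, NA r k ξ = (intervalDecompositions (truncation L r)).card := by
  have hbij : Set.BijOn (fun m : ℕ →₀ ℕ →₀ ℕ => m.uncurry.mapDomain (typeARoot r))
      ↑(intervalDecompositions (truncation L r))
      {x | (∀ v ∈ x.support, isPosRootA r v) ∧ (x.sum fun v n => n • v) = ξ} := by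
    have hroots := mapDomain_bijOn_of_bijOn (M := ℕ) (typeARoot_bijOn r)
    refine (hroots.subset_right fun x hx => hx.1).comp
      (Finsupp.curryEquiv.symm.bijOn fun m => ?_)
    rw [Finset.mem_coe, mem_intervalDecompositions_truncation]
    refine and_congr_right fun hsupp => (and_iff_right (hroots.mapsTo hsupp)).trans ?_
    change ((m.uncurry.mapDomain (typeARoot r)).sum fun v n => n • v) = ξ ↔ _
    rw [sum_mapDomain_typeARoot, funext_iff]
    simp only [hξ]
  rw [← Set.ncard_coe_finset, hbij.ncard_eq,
    ← tsum_ncard_fiber (hbij.finite_iff_finite.mp (Finset.finite_toSet _))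
      fun x => x.sum fun _ n => n]
  refine tsum_congr fun k => congrArg Set.ncard (Set.ext fun x => ?_)
  simp only [Set.mem_ofPred_eq]
  tauto

theorem total_decompositions_nonconsecutive_general (r ℓ : ℕ) (hr : 0 < r)
    (I : Finset ℕ) (hcard : I.card = ℓ)
    (hI : ∀ i ∈ I, 1 < i ∧ i < r)
    (hnc : ∀ i ∈ I, ∀ j ∈ I, i < j → i + 2 ≤ j)
    (c : ℕ → ℕ) (hc : ∀ i ∈ I, 1 ≤ c i)
    (lam : Fin r → ℕ)
    (hlam : lam = fun t => if t.val + 1 ∈ I then 1 + c (t.val + 1) else 1) :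
    ∑' k : ℕ, NA r k lam = 2 ^ (r - 1 - 2 * ℓ) * 5 ^ ℓ := by
  obtain ⟨n, rfl⟩ := Nat.exists_eq_add_one_of_ne_zero hr.ne'
  have hcount : Nat.count (· ∈ I) (n + 1) = ℓ := by
    rw [Nat.count_eq_card_filter_range, ← hcard, Finset.filter_mem_eq_inter,
      Finset.inter_eq_right.mpr fun i hi => Finset.mem_range.mpr (hI i hi).2]
  let L : ℕ → ℕ := fun i => if i ∈ I then 1 + c i else 1
  obtain ⟨k, hk, hD⟩ := card_intervalDecompositions_truncation (L := L) (fun i hi => (hI i hi).1)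
    (fun i hi hsucc => absurd (hnc i hi _ hsucc i.lt_succ_self) (by lia))
    (fun i hi => if_neg hi) (fun i hi => by simpa [L, hi] using Nat.add_le_add_left (hc i hi) 1)
    n (fun h => (hI _ h).2.false)
  rw [hcount] at hk hD
  rw [tsum_NA_eq_card (L := L) fun t => congrFun hlam t, hD, Nat.add_sub_cancel, hk,
    Nat.add_sub_cancel]

/-- Corollary 3.5: for `λ = Σ α_i + Σ_j c_{i_j} α_{i_j}` with `I = {i_1 < ⋯ < i_ℓ}`
nonconsecutive, `1 < i_1`, `i_ℓ < r−2`, and positive coefficients `c`, the total number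
of decompositions of `λ` as a sum of positive roots of `A_r` is
`℘(λ) = 2^{r−1−2ℓ}·5^ℓ = 2^{r−1}(5/4)^ℓ`. -/
theorem total_decompositions_nonconsecutive (r ℓ : ℕ) (hr : 5 ≤ r)
    (I : Finset ℕ) (hcard : I.card = ℓ)
    (hI : ∀ i ∈ I, 1 < i ∧ i < r - 2)
    (hnc : ∀ i ∈ I, ∀ j ∈ I, i < j → i + 2 ≤ j)
    (c : ℕ → ℕ) (hc : ∀ i ∈ I, 1 ≤ c i)
    (lam : Fin r → ℕ)
    (hlam : lam = fun t => if t.val + 1 ∈ I then 1 + c (t.val + 1) else 1) :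
    ∑' k : ℕ, NA r k lam = 2 ^ (r - 1 - 2 * ℓ) * 5 ^ ℓ :=
  total_decompositions_nonconsecutive_general r ℓ (by lia) I hcard
    (fun i hi => ⟨(hI i hi).1, (hI i hi).2.trans_le (r.sub_le 2)⟩) hnc c hc lam hlam
end
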